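/- arXiv:1006.3215 — 4 statements merged into one kernel-verified Lean document; each statement's English description precedes it below -/
import Mathlib

section
/- (Non-binary substitution preserves the solution space.) Let ι be a set of variables with a domain D_i for each i ∈ ι, and let assignments be dependent functions σ with σ(i) ∈ D_i for all i. Let P and Q be constraints, i.e., predicates on assignments, and let j ∈ ι. Assume P is functional on j, meaning: whenever two assignments σ and σ' agree on every variable except possibly j and both satisfy P, then σ(j) = σ'(j). Define the substituted constraint Q' by: Q'(σ) holds iff there exists v ∈ D_j such that the assignment σ[j:=v] (σ updated to take value v at j) satisfies both P and Q. Then for every assignment σ: (P(σ) ∧ Q(σ)) if and only if (P(σ) ∧ Q'(σ)). -/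
/-- Non-binary substitution preserves the solution space.

Assignments are dependent functions `σ : (i : ι) → D i`.  `P` is functional on the
variable `j`: any two assignments satisfying `P` that agree on all variables other
than `j` also agree at `j`.  The substituted constraint `Q'` holds of `σ` iff there
is a value `v ∈ D j` such that `σ[j := v]` satisfies both `P` and `Q`. -/
theorem nonbinary_substitution_equiv {ι : Type*} [DecidableEq ι] (D : ι → Type*)
    (P Q : (∀ i : ι, D i) → Prop) (j : ι)
    (hP : ∀ σ σ' : ∀ i : ι, D i,
      (∀ i : ι, i ≠ j → σ i = σ' i) → P σ → P σ' → σ j = σ' j) :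
    ∀ σ : ∀ i : ι, D i,
      (P σ ∧ Q σ) ↔
      (P σ ∧ ∃ v : D j, P (Function.update σ j v) ∧ Q (Function.update σ j v)) := by
  intro σ
  constructor
  · rintro ⟨hp, hq⟩
    refine ⟨hp, σ j, ?_⟩
    rw [Function.update_eq_self]
    exact ⟨hp, hq⟩
  · rintro ⟨hp, v, hpv, hqv⟩
    have h := hP σ (Function.update σ j v)
      (fun i hi => (Function.update_of_ne hi v σ).symm) hp hpv
    rw [Function.update_self] at h
    subst h
    rw [Function.update_eq_self] at hqv
    exact ⟨hp, hqv⟩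
end

section
/- (An arc-consistent family of the eliminated problem extends to an arc-consistent family of the original problem.) Let D_i, D_j be domains and, for each k in an index set K, let D_k be a domain. Let c_{ij} ⊆ D_i × D_j be a binary constraint functional on its second variable, and for each k ∈ K let c_{jk} ⊆ D_j × D_k and c_{ik} ⊆ D_i × D_k be binary constraints. Define the substituted constraints c'_{ik} = c_{ik} ∩ (c_{jk} ∘ c_{ij}) for each k ∈ K. Let A ⊆ D_i and, for each k ∈ K, B_k ⊆ D_k be such that (A, B_k) is arc consistent for c'_{ik} for every k ∈ K, and assume every a ∈ A has a support in D_j under c_{ij}. Then there exists B ⊆ D_j such that: (A, B) is arc consistent for c_{ij}; for every k ∈ K, (B, B_k) is arc consistent for c_{jk}; and for every k ∈ K, (A, B_k) is arc consistent for c_{ik}. -/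
/-- A binary constraint `c ⊆ A × B` is functional on its second variable if
for every `a ∈ A` there is at most one `b ∈ B` with `(a, b) ∈ c`. -/
def FunctionalOnSnd {A B : Type*} (c : Set (A × B)) : Prop :=
  ∀ (a : A) (b b' : B), (a, b) ∈ c → (a, b') ∈ c → b = b'

/-- The composition `d ∘ c` of constraints `c ⊆ A × B` and `d ⊆ B × C`. -/
def ConstraintComp {A B C : Type*} (c : Set (A × B)) (d : Set (B × C)) : Set (A × C) :=
  {p : A × C | ∃ b : B, (p.1, b) ∈ c ∧ (b, p.2) ∈ d}

/-- `(A', B')` is arc consistent for the constraint `c ⊆ A × B`: every value of `A'`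
has a support in `B'`, and every value of `B'` has a support in `A'`. -/
def ArcConsistentPair {A B : Type*} (c : Set (A × B)) (A' : Set A) (B' : Set B) : Prop :=
  (∀ a ∈ A', ∃ b ∈ B', (a, b) ∈ c) ∧ (∀ b ∈ B', ∃ a ∈ A', (a, b) ∈ c)

/-- An arc-consistent family of the eliminated problem extends to an arc-consistent
family of the original problem. -/
theorem arc_consistent_extension {Di Dj : Type*} {K : Type*} {Dk : K → Type*}
    (cij : Set (Di × Dj)) (cjk : ∀ k : K, Set (Dj × Dk k)) (cik : ∀ k : K, Set (Di × Dk k))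
    (hfun : FunctionalOnSnd cij)
    (A : Set Di) (B : ∀ k : K, Set (Dk k))
    (hAC : ∀ k : K, ArcConsistentPair (cik k ∩ ConstraintComp cij (cjk k)) A (B k))
    (hsupp : ∀ a ∈ A, ∃ b : Dj, (a, b) ∈ cij) :
    ∃ Bj : Set Dj,
      ArcConsistentPair cij A Bj ∧
      (∀ k : K, ArcConsistentPair (cjk k) Bj (B k)) ∧
      (∀ k : K, ArcConsistentPair (cik k) A (B k)) := by
  refine ⟨{b | ∃ a ∈ A, (a, b) ∈ cij}, ⟨?_, ?_⟩, fun k => ⟨?_, ?_⟩, fun k => ⟨?_, ?_⟩⟩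
  · intro a ha
    obtain ⟨b, hb⟩ := hsupp a ha
    exact ⟨b, ⟨a, ha, hb⟩, hb⟩
  · rintro b ⟨a, ha, hb⟩
    exact ⟨a, ha, hb⟩
  · rintro b ⟨a, ha, hb⟩
    obtain ⟨e, he, _, b', hb', hd⟩ := (hAC k).1 a ha
    have h := hfun a b b' hb hb'
    subst h
    exact ⟨e, he, hd⟩
  · intro e he
    obtain ⟨a, ha, _, b, hb, hd⟩ := (hAC k).2 e he
    exact ⟨b, ⟨a, ha, hb⟩, hd⟩
  · intro a ha
    obtain ⟨e, he, h, _⟩ := (hAC k).1 a ha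
    exact ⟨e, he, h⟩
  · intro e he
    obtain ⟨a, ha, h, _⟩ := (hAC k).2 e he
    exact ⟨a, ha, h⟩
end

section
/- (Elimination does not enlarge the arc-consistency closure.) Let P be a binary CSP with variable set V, domains (D_v)_{v∈V}, and constraints c_{uv} ⊆ D_u × D_v on certain ordered pairs of distinct variables, satisfying (a,b) ∈ c_{uv} iff (b,a) ∈ c_{vu}. Let i, j ∈ V be distinct variables such that c_{ij} exists and is functional on its second variable. Let P' be the CSP obtained from P by eliminating j using c_{ij}: its variable set is V \ {j}; for each k ∉ {i,j} such that c_{jk} exists in P, the constraint between i and k in P' is c'_{ik} = c_{ik} ∩ (c_{jk} ∘ c_{ij}) (taking c_{ik} = D_i × D_k if P has no constraint between i and k); the domain of i in P' is D'_i = {a ∈ D_i | a has a support in D_j under c_{ij}}; all other domains and all constraints not involving j are unchanged. Then for every variable v ∈ V \ {j}, the arc-consistency closure of P' at v is a subset of the arc-consistency closure of P at v. -/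
/-- A subdomain family: a choice of `A v ⊆ dom v` for each variable `v`. -/
def SubdomainFamily {V : Type*} {D : V → Type*} (dom A : ∀ v : V, Set (D v)) : Prop :=
  ∀ v : V, A v ⊆ dom v

/-- A subdomain family `A` is arc consistent for the CSP with constrained pairs `cons`
and constraint relations `C`: for every constraint `c_{uv}`, every value in `A u` has a
support in `A v`. -/
def ArcConsistentFamily {V : Type*} {D : V → Type*} (cons : V → V → Prop)
    (C : ∀ u v : V, Set (D u × D v)) (A : ∀ v : V, Set (D v)) : Prop :=
  ∀ u v : V, cons u v → ∀ a ∈ A u, ∃ b ∈ A v, (a, b) ∈ C u v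

/-- The arc-consistency closure of a CSP at a variable `v`: the component at `v` of the
componentwise greatest arc-consistent subdomain family, i.e. the union of all
arc-consistent subdomain families. -/
def ACClosure {V : Type*} {D : V → Type*} (dom : ∀ v : V, Set (D v))
    (cons : V → V → Prop) (C : ∀ u v : V, Set (D u × D v)) (v : V) : Set (D v) :=
  {a : D v | ∃ A : ∀ w : V, Set (D w),
    SubdomainFamily dom A ∧ ArcConsistentFamily cons C A ∧ a ∈ A v}

/-- Elimination does not enlarge the arc-consistency closure.

The original CSP `P` has variables `V`, domains `dom v` (inside ambient value types
`D v`), constrained pairs `cons`, and constraint relations `C` (symmetric, on distinct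
variables, contained in the domains).  `c_{ij}` exists and is functional on `j`.

The eliminated CSP `P'` (variable set `V \ {j}`, here modelled by leaving `j`
unconstrained) is described by `dom'`, `cons'`, `C'`:
* `dom' i` keeps exactly the values of `dom i` having a support in `dom j` under
  `c_{ij}`; all other domains are unchanged;
* its constrained pairs avoid `j`, and consist of the old pairs together with the new
  pairs `(i, k)` (and `(k, i)`) for `k ∉ {i, j}` with `c_{jk}` in `P`;
* on a constrained pair, `C'` is the old constraint (or `dom u × dom v` where `P` had
  no constraint) intersected, for the pairs involving `i` and a neighbour `k` of `j`,
  with the composition `c_{jk} ∘ c_{ij}`; constraints not involving `j` are unchanged.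

Then at every variable `v ≠ j` the arc-consistency closure of `P'` is contained in that
of `P`. -/
theorem elimination_shrinks_AC_closure {V : Type*} {D : V → Type*}
    (dom : ∀ v : V, Set (D v)) (cons : V → V → Prop) (C : ∀ u v : V, Set (D u × D v))
    (hconsSymm : ∀ u v : V, cons u v → cons v u)
    (hconsNe : ∀ u v : V, cons u v → u ≠ v)
    (hCsymm : ∀ u v : V, cons u v → ∀ (a : D u) (b : D v), (a, b) ∈ C u v ↔ (b, a) ∈ C v u)
    (hCdom : ∀ u v : V, cons u v → ∀ p ∈ C u v, p.1 ∈ dom u ∧ p.2 ∈ dom v)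
    (i j : V) (hij : i ≠ j) (hconsij : cons i j)
    (hfun : ∀ (a : D i) (b b' : D j), (a, b) ∈ C i j → (a, b') ∈ C i j → b = b')
    (dom' : ∀ v : V, Set (D v))
    (hdom' : ∀ (v : V) (x : D v), x ∈ dom' v ↔
      x ∈ dom v ∧ ∀ h : v = i, ∃ b ∈ dom j, (cast (congrArg D h) x, b) ∈ C i j)
    (cons' : V → V → Prop)
    (hcons' : ∀ u v : V, cons' u v ↔
      (u ≠ j ∧ v ≠ j ∧
        (cons u v ∨ (u = i ∧ v ≠ i ∧ cons j v) ∨ (v = i ∧ u ≠ i ∧ cons u j))))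
    (C' : ∀ u v : V, Set (D u × D v))
    (hC' : ∀ (u v : V) (p : D u × D v), p ∈ C' u v ↔
      ((cons u v → p ∈ C u v) ∧
       (¬ cons u v → p.1 ∈ dom u ∧ p.2 ∈ dom v) ∧
       (∀ h : u = i, v ≠ i → cons j v →
         ∃ b : D j, (cast (congrArg D h) p.1, b) ∈ C i j ∧ (b, p.2) ∈ C j v) ∧
       (∀ h : v = i, u ≠ i → cons u j →
         ∃ b : D j, (cast (congrArg D h) p.2, b) ∈ C i j ∧ (p.1, b) ∈ C u j))) :
    ∀ v : V, v ≠ j → ACClosure dom' cons' C' v ⊆ ACClosure dom cons C v := by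
  rintro v hv x ⟨A, hA, hAC, hx⟩
  refine ⟨fun w => {x | (w ≠ j ∧ x ∈ A w) ∨ ∃ h : w = j, ∃ a ∈ A i, (a, cast (congrArg D h) x) ∈ C i j}, ?_, ?_, Or.inl ⟨hv, hx⟩⟩
  · rintro w y (⟨_, hy⟩ | ⟨rfl, a, ha, hy⟩)
    · exact ((hdom' w y).1 (hA w hy)).1
    · exact (hCdom _ _ hconsij _ hy).2
  · rintro u w huw y (⟨hu, hy⟩ | ⟨rfl, a, ha, hy⟩)
    · by_cases hw : w = j
      · subst hw
        by_cases hui : u = i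
        · subst hui
          obtain ⟨b, _, hb⟩ := ((hdom' u y).1 (hA u hy)).2 rfl
          exact ⟨b, Or.inr ⟨rfl, y, hy, hb⟩, hb⟩
        · obtain ⟨z, hz, hyz⟩ := hAC u i
            ((hcons' u i).2 ⟨hu, hij, Or.inr (Or.inr ⟨rfl, hui, huw⟩)⟩) y hy
          obtain ⟨b, hb, hb2⟩ := ((hC' _ _ _).1 hyz).2.2.2 rfl hui huw
          exact ⟨b, Or.inr ⟨rfl, z, hz, hb⟩, hb2⟩
      · obtain ⟨z, hz, hyz⟩ := hAC u w ((hcons' u w).2 ⟨hu, hw, Or.inl huw⟩) y hy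
        exact ⟨z, Or.inl ⟨hw, hz⟩, ((hC' _ _ _).1 hyz).1 huw⟩
    · have hw : w ≠ u := (hconsNe _ _ huw).symm
      by_cases hwi : w = i
      · subst hwi
        exact ⟨a, Or.inl ⟨hw, ha⟩, (hCsymm _ _ hconsij _ _).1 hy⟩
      · obtain ⟨z, hz, hyz⟩ := hAC i w
            ((hcons' i w).2 ⟨hij, hw, Or.inr (Or.inl ⟨rfl, hwi, huw⟩)⟩) a ha
        obtain ⟨b, hb, hb2⟩ := ((hC' _ _ _).1 hyz).2.2.1 rfl hwi huw
        have e : y = b := hfun a y b hy hb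
        subst e
        exact ⟨z, Or.inl ⟨hw, hz⟩, hb2⟩
end

section
/- (Existence of an equivalent canonical functional form; correctness content of the Variable_Elimination algorithm.) Let P be a binary CSP with a finite set of variables V, finite domains (D_v)_{v∈V}, and at most one constraint c_{uv} ⊆ D_u × D_v per ordered pair of distinct variables, with (a,b) ∈ c_{uv} iff (b,a) ∈ c_{vu}. Then there exists a binary CSP P' on the same variable set V, with domains D'_v ⊆ D_v and at most one constraint per ordered pair of distinct variables (again with the converse symmetry), such that P' is in canonical functional form and P' has exactly the same set of solutions as P (as subsets of the product of the original domains). -/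
/-- A binary CSP over a variable set `V` with ambient value types `D v`:
domains `dom v ⊆ D v`, a set `cons` of (ordered) constrained pairs of distinct
variables, and at most one constraint relation `C u v ⊆ dom u × dom v` per ordered
pair, with the converse symmetry `(a,b) ∈ c_{uv} ↔ (b,a) ∈ c_{vu}`. -/
structure BinaryCSP (V : Type*) (D : V → Type*) where
  dom : ∀ v : V, Set (D v)
  cons : V → V → Prop
  C : ∀ u v : V, Set (D u × D v)
  cons_symm : ∀ u v : V, cons u v → cons v u
  cons_ne : ∀ u v : V, cons u v → u ≠ v
  C_symm : ∀ u v : V, cons u v → ∀ (a : D u) (b : D v), (a, b) ∈ C u v ↔ (b, a) ∈ C v u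
  C_dom : ∀ u v : V, cons u v → ∀ p ∈ C u v, p.1 ∈ dom u ∧ p.2 ∈ dom v

/-- A solution: an assignment of a domain value to each variable satisfying all
constraints. -/
def BinaryCSP.Solution {V : Type*} {D : V → Type*} (P : BinaryCSP V D)
    (τ : ∀ v : V, D v) : Prop :=
  (∀ v : V, τ v ∈ P.dom v) ∧ ∀ u v : V, P.cons u v → (τ u, τ v) ∈ P.C u v

/-- The constraint `c_{uv}` is functional on its second variable `v`. -/
def BinaryCSP.FunctionalOn {V : Type*} {D : V → Type*} (P : BinaryCSP V D)
    (u v : V) : Prop :=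
  ∀ (a : D u) (b b' : D v), (a, b) ∈ P.C u v → (a, b') ∈ P.C u v → b = b'

/-- Variable `j` is constrained by no constraint of the CSP other than (possibly) the
one with `i`. -/
def BinaryCSP.OnlyConstraint {V : Type*} {D : V → Type*} (P : BinaryCSP V D)
    (j i : V) : Prop :=
  ∀ k : V, k ≠ i → ¬ P.cons j k

/-- Canonical functional form: for every constraint `c_{ij}` functional on `j`, if
`c_{ij}` is bi-functional then at least one of `i`, `j` has no other constraint;
otherwise `j` has no other constraint. -/
def BinaryCSP.Canonical {V : Type*} {D : V → Type*} (P : BinaryCSP V D) : Prop :=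
  ∀ i j : V, P.cons i j → P.FunctionalOn i j →
    (P.FunctionalOn j i → (P.OnlyConstraint i j ∨ P.OnlyConstraint j i)) ∧
    (¬ P.FunctionalOn j i → P.OnlyConstraint j i)

/-- Eliminate `j` through the constraint `c_{ij}`. -/
def BinaryCSP.elim {V : Type*} {D : V → Type*} (P : BinaryCSP V D) (i j : V)
    (hij : P.cons i j) : BinaryCSP V D where
  dom := P.dom
  cons u v := (u = i ∧ v = j) ∨ (u = j ∧ v = i) ∨
    (u ≠ j ∧ v ≠ j ∧ u ≠ v ∧ (P.cons u v ∨ (u = i ∧ P.cons j v) ∨ (v = i ∧ P.cons j u)))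
  C u v := {p | p.1 ∈ P.dom u ∧ p.2 ∈ P.dom v ∧ (P.cons u v → p ∈ P.C u v) ∧
    (u = i → P.cons j v → ∃ b : D j, (p.1, b) ∈ P.C u j ∧ (b, p.2) ∈ P.C j v) ∧
    (v = i → P.cons j u → ∃ b : D j, (p.2, b) ∈ P.C v j ∧ (b, p.1) ∈ P.C j u)}
  cons_symm := by
    rintro u v (h | h | ⟨h1, h2, h3, h4⟩)
    · exact Or.inr (Or.inl ⟨h.2, h.1⟩)
    · exact Or.inl ⟨h.2, h.1⟩
    · refine Or.inr (Or.inr ⟨h2, h1, h3.symm, ?_⟩)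
      rcases h4 with h | h | h
      · exact Or.inl (P.cons_symm _ _ h)
      · exact Or.inr (Or.inr h)
      · exact Or.inr (Or.inl h)
  cons_ne := by
    have := P.cons_ne i j hij
    rintro u v (⟨rfl, rfl⟩ | ⟨rfl, rfl⟩ | h)
    · exact this
    · exact this.symm
    · exact h.2.2.1
  C_symm := by
    have key : ∀ (u v : V) (a : D u) (b : D v), (P.cons u v → (a, b) ∈ P.C u v) →
        (P.cons v u → (b, a) ∈ P.C v u) := fun u v a b h hc =>
      (P.C_symm v u hc b a).2 (h (P.cons_symm _ _ hc))
    intro u v _ a b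
    constructor
    · rintro ⟨h1, h2, h3, h4, h5⟩
      exact ⟨h2, h1, key u v a b h3, h5, h4⟩
    · rintro ⟨h1, h2, h3, h4, h5⟩
      exact ⟨h2, h1, key v u b a h3, h5, h4⟩
  C_dom := fun u v _ p hp => ⟨hp.1, hp.2.1⟩

theorem BinaryCSP.elim_solution {V : Type*} {D : V → Type*} (P : BinaryCSP V D) (i j : V)
    (hij : P.cons i j) (hf : P.FunctionalOn i j) (τ : ∀ v : V, D v) :
    (P.elim i j hij).Solution τ ↔ P.Solution τ := by
  constructor
  · rintro ⟨hd, hc⟩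
    have h0 : (τ i, τ j) ∈ P.C i j := (hc i j (Or.inl ⟨rfl, rfl⟩)).2.2.1 hij
    have hj : ∀ v, P.cons j v → (τ j, τ v) ∈ P.C j v := by
      intro v hv
      by_cases hvi : v = i
      · subst hvi
        exact (P.C_symm _ _ hij _ _).1 h0
      · have hvj := (P.cons_ne _ _ hv).symm
        obtain ⟨b, hb1, hb2⟩ := (hc i v (Or.inr (Or.inr ⟨P.cons_ne _ _ hij, hvj,
          fun h => hvi h.symm, Or.inr (Or.inl ⟨rfl, hv⟩)⟩))).2.2.2.1 rfl hv
        rw [hf _ _ _ h0 hb1]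
        exact hb2
    refine ⟨hd, fun u v huv => ?_⟩
    by_cases hu : u = j
    · subst hu
      exact hj v huv
    by_cases hv : v = j
    · subst hv
      exact (P.C_symm _ _ huv _ _).2 (hj u (P.cons_symm _ _ huv))
    exact (hc u v (Or.inr (Or.inr ⟨hu, hv, P.cons_ne _ _ huv, Or.inl huv⟩))).2.2.1 huv
  · rintro ⟨hd, hc⟩
    refine ⟨hd, fun u v _ => ⟨hd u, hd v, hc u v, ?_, ?_⟩⟩
    · rintro rfl h
      exact ⟨τ j, hc _ _ hij, hc _ _ h⟩
    · rintro rfl h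
      exact ⟨τ j, hc _ _ hij, hc _ _ h⟩

/-- The variables in `E` have been eliminated. -/
def BinaryCSP.Star {V : Type*} {D : V → Type*} (P : BinaryCSP V D) (E : Set V) : Prop :=
  ∀ e ∈ E, ∀ k, P.cons e k → k ∉ E ∧ P.FunctionalOn k e ∧ ∀ k', P.cons e k' → k' = k

theorem BinaryCSP.elim_star {V : Type*} {D : V → Type*} (P : BinaryCSP V D) (i j : V)
    (hij : P.cons i j) (hf : P.FunctionalOn i j) (E : Set V) (hE : P.Star E)
    (hi : i ∉ E) (hj : j ∉ E) : (P.elim i j hij).Star (insert j E) := by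
  have hne := P.cons_ne _ _ hij
  rintro e (rfl | he) k hk
  · have hu : ∀ k, (P.elim i e hij).cons e k → k = i := by
      rintro k (h | h | h)
      · exact absurd h.1.symm hne
      · exact h.2
      · exact absurd rfl h.1
    obtain rfl := hu k hk
    refine ⟨?_, ?_, hu⟩
    · rintro (h | h)
      · exact hne h
      · exact hi h
    · intro a b b' h h'
      exact hf a b b' (h.2.2.1 hij) (h'.2.2.1 hij)
  · have hei : e ≠ i := fun h => hi (h ▸ he)
    have hej : e ≠ j := fun h => hj (h ▸ he)
    have hc : ∀ k, (P.elim i j hij).cons e k →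
        k ≠ j ∧ (P.cons e k ∨ (k = i ∧ P.cons e j)) := by
      rintro k (h | h | ⟨_, h2, _, h | h | h⟩)
      · exact absurd h.1 hei
      · exact absurd h.1 hej
      · exact ⟨h2, Or.inl h⟩
      · exact absurd h.1 hei
      · exact ⟨h2, Or.inr ⟨h.1, P.cons_symm _ _ h.2⟩⟩
    obtain ⟨hkj, hk' | ⟨rfl, hk'⟩⟩ := hc k hk
    · obtain ⟨h1, h2, h3⟩ := hE e he k hk'
      refine ⟨?_, ?_, ?_⟩
      · rintro (h | h)
        · exact hkj h
        · exact h1 h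
      · intro a b b' h h'
        have := P.cons_symm _ _ hk'
        exact h2 a b b' (h.2.2.1 this) (h'.2.2.1 this)
      · intro k' hk''
        obtain ⟨_, h | h⟩ := hc k' hk''
        · exact h3 _ h
        · exact absurd (h3 _ h.2).symm hkj
    · obtain ⟨h1, h2, h3⟩ := hE e he j hk'
      refine ⟨?_, ?_, ?_⟩
      · rintro (h | h)
        · exact hkj h
        · exact hi h
      · intro a b b' h h'
        have hje := P.cons_symm _ _ hk'
        obtain ⟨x, hx1, hx2⟩ := h.2.2.2.1 rfl hje
        obtain ⟨y, hy1, hy2⟩ := h'.2.2.2.1 rfl hje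
        obtain rfl := hf _ _ _ hx1 hy1
        exact h2 _ _ _ hx2 hy2
      · intro k' hk''
        obtain ⟨h0, h | h⟩ := hc k' hk''
        · exact absurd (h3 _ h) h0
        · exact h.1

theorem BinaryCSP.star_canonical {V : Type*} [Finite V] {D : V → Type*} (n : ℕ) :
    ∀ (P : BinaryCSP V D) (E : Set V), P.Star E → Eᶜ.ncard = n →
    ∃ P' : BinaryCSP V D,
      (∀ v : V, P'.dom v ⊆ P.dom v) ∧ P'.Canonical ∧
      ∀ τ : ∀ v : V, D v, (P'.Solution τ ↔ P.Solution τ) := by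
  induction n using Nat.strong_induction_on with
  | _ n ih =>
  intro P E hE hn
  by_cases h : ∃ i j, P.cons i j ∧ P.FunctionalOn i j ∧ i ∉ E ∧ j ∉ E
  · obtain ⟨i, j, hij, hf, hi, hj⟩ := h
    have hlt : (insert j E)ᶜ.ncard < n := by
      rw [← hn]
      refine Set.ncard_lt_ncard ?_ (Set.toFinite _)
      exact compl_lt_compl_iff_lt.2 (Set.ssubset_insert hj)
    obtain ⟨P', h1, h2, h3⟩ := ih _ hlt (P.elim i j hij) _ (P.elim_star i j hij hf E hE hi hj) rfl
    exact ⟨P', h1, h2, fun τ => (h3 τ).trans (P.elim_solution i j hij hf τ)⟩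
  · refine ⟨P, fun v => subset_rfl, ?_, fun τ => Iff.rfl⟩
    have honly : ∀ i j, P.cons i j → i ∈ E → P.OnlyConstraint i j := fun i j hij hi k hk hc =>
      hk ((hE i hi j hij).2.2 k hc)
    intro i j hij hf
    by_cases hj : j ∈ E
    · have := honly j i (P.cons_symm _ _ hij) hj
      exact ⟨fun _ => Or.inr this, fun _ => this⟩
    · have hi : i ∈ E := by
        by_contra hi
        exact h ⟨i, j, hij, hf, hi, hj⟩
      exact ⟨fun _ => Or.inl (honly i j hij hi), fun hn => absurd (hE i hi j hij).2.1 hn⟩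

/-- Existence of an equivalent canonical functional form (correctness content of the
`Variable_Elimination` algorithm): every binary CSP with finitely many variables and
finite domains admits a binary CSP on the same variables, with smaller domains, in
canonical functional form, and with exactly the same solutions. -/
theorem exists_equivalent_canonical_form {V : Type*} [Finite V] {D : V → Type*}
    [∀ v : V, Finite (D v)] (P : BinaryCSP V D) :
    ∃ P' : BinaryCSP V D,
      (∀ v : V, P'.dom v ⊆ P.dom v) ∧ P'.Canonical ∧
      ∀ τ : ∀ v : V, D v, (P'.Solution τ ↔ P.Solution τ) := by
  exact BinaryCSP.star_canonical _ P ∅ (fun e he => absurd he (Set.notMem_empty e)) rfl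
end
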